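/- Let d, k ≥ 1 be integers. For every x, y ∈ 𝕊^k and every t ≥ 0, p_t^{rw}(x,y) − p_t^ℓ(x,y) = ∫_0^t Σ_{w ∈ 𝕊^k} p_{t−s}^ℓ(x,w) · Σ_{i ≠ j} 1{‖w_j − w_i‖ = 1} [p_s^{rw}(δ^{i,j}w, y) − p_s^{rw}(w, y)] ds − ∫_0^t Σ_{w ∈ 𝕊^k} p_{t−s}^ℓ(x,w) · Σ_{1 ≤ i < j ≤ k} 1{‖w_i − w_j‖ = 1} [p_s^{rw}(σ^{i,j}w, y) − p_s^{rw}(w, y)] ds. -/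

import Mathlib

open scoped Classical

noncomputable section

namespace SSEPPaper

/-- Configurations of `k` labelled particles on `ℤ^d`. -/
abbrev Conf (d k : ℕ) := Fin k → Fin d → ℤ

/-- Euclidean norm of an integer vector in `ℤ^d`. -/
def vnorm {d : ℕ} (v : Fin d → ℤ) : ℝ := Real.sqrt (∑ j, ((v j : ℝ)) ^ 2)

/-- Euclidean norm on `(ℝ^d)^k` of an integer configuration. -/
def cnorm {d k : ℕ} (x : Conf d k) : ℝ := Real.sqrt (∑ i, ∑ j, ((x i j : ℝ)) ^ 2)

/-- The set `𝕊^k` of configurations with pairwise distinct particle positions. -/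
def SSet (d k : ℕ) : Set (Conf d k) := {x | ∀ i j : Fin k, i ≠ j → x i ≠ x j}

/-- Swap of the coordinates `i` and `j` of a configuration, i.e. `σ^{i,j}x`. -/
def cswap {d k : ℕ} (i j : Fin k) (x : Conf d k) : Conf d k := x ∘ Equiv.swap i j

/-- `δ^{i,j}w`: the configuration which agrees with `w` except that its `j`-th coordinate
is replaced by `w i`. -/
def cdelta {d k : ℕ} (i j : Fin k) (w : Conf d k) : Conf d k := Function.update w j (w i)

/-- Kronecker delta function at `y`. -/
def deltaFn {α : Type*} (y : α) : α → ℝ := fun x => if x = y then 1 else 0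

/-- Generator of the labelled exclusion process, extended to all of `(ℤ^d)^k`. -/
def Lexc {d k : ℕ} (f : Conf d k → ℝ) : Conf d k → ℝ := fun x =>
  (∑' y : Conf d k, if cnorm (y - x) = 1 ∧ y ∈ SSet d k then f y - f x else 0) +
    ∑ i : Fin k, ∑ j : Fin k,
      if i < j ∧ vnorm (x i - x j) = 1 ∧ x ∈ SSet d k then f (cswap i j x) - f x else 0

/-- Generator of `k` independent simple random walks on `ℤ^d`. -/
def Lrw {d k : ℕ} (f : Conf d k → ℝ) : Conf d k → ℝ := fun x =>
  ∑' z : Conf d k, if cnorm (z - x) = 1 then f z - f x else 0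

/-- Generator (discrete Laplacian) of a single simple random walk on `ℤ^d`. -/
def Lap {d : ℕ} (f : (Fin d → ℤ) → ℝ) : (Fin d → ℤ) → ℝ := fun x =>
  ∑' y : Fin d → ℤ, if vnorm (y - x) = 1 then f y - f x else 0

/-- Transition probabilities `p_t^ℓ(x,y) = (e^{tL^ℓ} δ_y)(x)` of the labelled exclusion
process, given by the exponential power series of the generator. -/
def ptl {d k : ℕ} (t : ℝ) (x y : Conf d k) : ℝ :=
  ∑' n : ℕ, t ^ n / n.factorial * ((Lexc (d := d) (k := k))^[n] (deltaFn y)) x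

/-- Transition probabilities `p_t^{rw}(x,y) = (e^{tL^{rw}} δ_y)(x)` of `k` independent
simple random walks on `ℤ^d`. -/
def ptrw {d k : ℕ} (t : ℝ) (x y : Conf d k) : ℝ :=
  ∑' n : ℕ, t ^ n / n.factorial * ((Lrw (d := d) (k := k))^[n] (deltaFn y)) x

/-- Transition probabilities `p_t(x,y) = (e^{tΔ} δ_y)(x)` of a single continuous-time
simple random walk on `ℤ^d`. -/
def pt1 {d : ℕ} (t : ℝ) (x y : Fin d → ℤ) : ℝ :=
  ∑' n : ℕ, t ^ n / n.factorial * ((Lap (d := d))^[n] (deltaFn y)) x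

/-- The configuration `e₁₁ = ((1,0,…,0),(0,…,0),…,(0,…,0))`. -/
def e11 (d k : ℕ) : Conf d k := fun i j => if i.val = 0 ∧ j.val = 0 then 1 else 0

/-!
Both generators are bounded operators on `ℓ¹`, so `s ↦ e^{(t-s)A} e^{sB}` has derivative
`e^{(t-s)A} (B - A) e^{sB}`, and integrating over `[0, t]` gives Duhamel's formula. For `A` the
exclusion process and `B` the random walk, `B - A` consists of the jumps of the walk into
configurations outside `𝕊^k`, minus the swaps. From `w ∈ 𝕊^k`, a jump leaves `𝕊^k` exactly when it
moves some particle `j` onto a neighbouring particle `i`; it then ends in `δ^{i,j}w`, which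
determines `(i, j)`. Finally `e^{(t-s)A}` is summation against its kernel `p^ℓ_{t-s}(x, ·)`, which
vanishes outside `𝕊^k` because the values of `L^ℓ f` on `𝕊^k` only depend on those of `f` there.
-/

open NormedSpace (exp)
open Function (Injective Involutive)
open scoped ENNReal lp

section Duhamel

variable {𝔸 : Type*} [NormedRing 𝔸] [NormedAlgebra ℝ 𝔸] [CompleteSpace 𝔸]

theorem continuous_exp_mul_mul_exp (a b c : 𝔸) (t : ℝ) :
    Continuous fun s : ℝ ↦ exp ((t - s) • a) * c * exp (s • b) := by
  have hexp (x : 𝔸) : Continuous fun s : ℝ ↦ exp (s • x) :=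
    (differentiable_exp_smul_const ℝ x).continuous
  exact (((hexp a).comp (by fun_prop)).mul continuous_const).mul (hexp b)

theorem hasDerivAt_exp_mul_exp (a b : 𝔸) (t s : ℝ) :
    HasDerivAt (fun s : ℝ ↦ exp ((t - s) • a) * exp (s • b))
      (exp ((t - s) • a) * (b - a) * exp (s • b)) s := by
  have ha : HasDerivAt (fun s : ℝ ↦ exp ((t - s) • a)) (-(exp ((t - s) • a) * a)) s := by
    simpa [Function.comp_def] using
      (hasDerivAt_exp_smul_const a (t - s)).scomp s ((hasDerivAt_id s).const_sub t)
  refine (ha.mul (hasDerivAt_exp_smul_const' b s)).congr_deriv ?_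
  noncomm_ring

theorem exp_smul_sub_exp_smul_eq_integral (a b : 𝔸) (t : ℝ) :
    exp (t • b) - exp (t • a) = ∫ s in (0 : ℝ)..t, exp ((t - s) • a) * (b - a) * exp (s • b) := by
  rw [intervalIntegral.integral_eq_sub_of_hasDerivAt
    (fun s _ ↦ hasDerivAt_exp_mul_exp a b t s)
    ((continuous_exp_mul_mul_exp a b (b - a) t).intervalIntegrable _ _)]
  simp

theorem apply_exp_smul_sub_apply_exp_smul_eq_integral_sub {F : Type*} [NormedAddCommGroup F]
    [NormedSpace ℝ F] [CompleteSpace F] (φ : 𝔸 →L[ℝ] F) {a b c₁ c₂ : 𝔸} (h : b - a = c₁ - c₂)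
    (t : ℝ) :
    φ (exp (t • b)) - φ (exp (t • a)) =
      (∫ s in (0 : ℝ)..t, φ (exp ((t - s) • a) * c₁ * exp (s • b))) -
        ∫ s in (0 : ℝ)..t, φ (exp ((t - s) • a) * c₂ * exp (s • b)) := by
  have hint (c : 𝔸) := (continuous_exp_mul_mul_exp a b c t).intervalIntegrable
    (μ := MeasureTheory.volume) 0 t
  rw [φ.intervalIntegral_comp_comm (hint c₁), φ.intervalIntegral_comp_comm (hint c₂), ← map_sub,
    ← map_sub, ← intervalIntegral.integral_sub (hint c₁) (hint c₂),
    exp_smul_sub_exp_smul_eq_integral, h]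
  simp only [mul_sub, sub_mul]

end Duhamel

section CompInjective

variable {𝕜 α β E : Type*} [NontriviallyNormedField 𝕜] [NormedAddCommGroup E] [NormedSpace 𝕜 E]
  {p : ℝ≥0∞}

theorem memℓp_comp_injective {f : β → E} (hf : Memℓp f p) {φ : α → β} (hφ : Injective φ) :
    Memℓp (f ∘ φ) p := by
  obtain rfl | rfl | hp := p.trichotomy
  · exact memℓp_zero (hf.finite_dsupport.preimage hφ.injOn)
  · exact memℓp_infty (hf.bddAbove.mono (Set.range_comp_subset_range φ fun y ↦ ‖f y‖))
  · exact memℓp_gen ((hf.summable hp).comp_injective hφ)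

theorem norm_comp_injective_le [Fact (1 ≤ p)] (f : ℓ^p(β, E)) {φ : α → β} (hφ : Injective φ) :
    ‖(⟨f ∘ φ, memℓp_comp_injective (lp.memℓp f) hφ⟩ : ℓ^p(α, E))‖ ≤ ‖f‖ := by
  have hp₀ : p ≠ 0 := (zero_lt_one.trans_le Fact.out).ne'
  obtain rfl | rfl | hp := p.trichotomy
  · exact (hp₀ rfl).elim
  · exact lp.norm_le_of_forall_le (norm_nonneg f) fun x ↦ lp.norm_apply_le_norm hp₀ f (φ x)
  · refine lp.norm_le_of_forall_sum_le hp (norm_nonneg f) fun s ↦ ?_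
    simpa using lp.sum_rpow_le_norm_rpow hp f (s.map ⟨φ, hφ⟩)

variable (𝕜 E p) in
/-- Composition with an injective map of index sets, as a contraction of `ℓ^p` spaces. -/
def compInjectiveCLM [Fact (1 ≤ p)] {φ : α → β} (hφ : Injective φ) :
    ℓ^p(β, E) →L[𝕜] ℓ^p(α, E) :=
  LinearMap.mkContinuous
    { toFun := fun f ↦ ⟨f ∘ φ, memℓp_comp_injective (lp.memℓp f) hφ⟩
      map_add' := fun _ _ ↦ rfl
      map_smul' := fun _ _ ↦ rfl } 1
    fun f ↦ (norm_comp_injective_le f hφ).trans_eq (one_mul _).symm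

end CompInjective

section Jump

variable {α : Type*} {p : ℝ≥0∞} [Fact (1 ≤ p)]

theorem norm_ite_id_zero_le_one (P : Prop) :
    ‖(if P then ContinuousLinearMap.id ℝ ℝ else 0)‖ ≤ 1 := by
  split_ifs <;> simp

variable (p) in
/-- The operator on `ℓ^p` of a deterministic jump `x ↦ φ x` performed only from the points of `A`:
it maps `f` to `1_A (f ∘ φ - f)`. -/
def jumpFromOp (A : Set α) {φ : α → α} (hφ : Injective φ) :
    ℓ^p(α, ℝ) →L[ℝ] ℓ^p(α, ℝ) :=
  (lp.mapCLM p (fun x ↦ if x ∈ A then ContinuousLinearMap.id ℝ ℝ else 0) zero_le_one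
      fun x ↦ norm_ite_id_zero_le_one (x ∈ A)) ∘L
    (compInjectiveCLM ℝ ℝ p hφ - ContinuousLinearMap.id ℝ _)

theorem jumpFromOp_apply (A : Set α) {φ : α → α} (hφ : Injective φ) (f : ℓ^p(α, ℝ)) (x : α) :
    jumpFromOp p A hφ f x = A.indicator (fun z ↦ f (φ z) - f z) x := by
  change (if x ∈ A then ContinuousLinearMap.id ℝ ℝ else 0) (f (φ x) - f x) = _
  rw [Set.indicator_apply]
  split_ifs <;> rfl

end Jump

section Semigroup

variable {α : Type*} {p : ℝ≥0∞}

variable (p) in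
/-- The indicator function of the point `y`, as an element of `ℓ^p`. -/
def pointMass (y : α) : ℓ^p(α, ℝ) := lp.single (E := fun _ ↦ ℝ) p y 1

theorem coe_pointMass (y : α) : ⇑(pointMass p y) = deltaFn y := by
  ext x
  simp [pointMass, deltaFn, Pi.single_apply]

variable [Fact (1 ≤ p)]

theorem sum_clm_apply_apply {ι : Type*} (s : Finset ι) (T : ι → ℓ^p(α, ℝ) →L[ℝ] ℓ^p(α, ℝ))
    (f : ℓ^p(α, ℝ)) (x : α) : (∑ i ∈ s, T i) f x = ∑ i ∈ s, T i f x := by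
  rw [_root_.sum_apply, lp.coeFn_sum, Finset.sum_apply]

theorem tsum_apply_pointMass_mul (hp : p ≠ ⊤) (T : ℓ^p(α, ℝ) →L[ℝ] ℓ^p(α, ℝ)) (g : ℓ^p(α, ℝ))
    (x : α) : ∑' w, T (pointMass p w) x * g w = T g x := by
  have hsum := (lp.hasSum_single hp g).mapL ((lp.evalCLM ℝ (fun _ : α ↦ ℝ) p x) ∘L T)
  refine (tsum_congr fun w ↦ ?_).trans hsum.tsum_eq
  have hsingle : lp.single (E := fun _ ↦ ℝ) p w (g w) = g w • pointMass p w := by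
    rw [pointMass, ← lp.single_smul, smul_eq_mul, mul_one]
  rw [hsingle, map_smul, smul_eq_mul, mul_comm]
  rfl

theorem coe_pow_apply_eq_iterate {L : (α → ℝ) → α → ℝ} {T : ℓ^p(α, ℝ) →L[ℝ] ℓ^p(α, ℝ)}
    (hT : ∀ f : ℓ^p(α, ℝ), ⇑(T f) = L f) (n : ℕ) (f : ℓ^p(α, ℝ)) : ⇑((T ^ n) f) = L^[n] f := by
  induction n with
  | zero => rfl
  | succ n ih =>
    rw [pow_succ', Function.iterate_succ_apply', ← ih, ← hT]
    rfl

theorem tsum_pow_div_factorial_mul_iterate {L : (α → ℝ) → α → ℝ}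
    {T : ℓ^p(α, ℝ) →L[ℝ] ℓ^p(α, ℝ)} (hT : ∀ f : ℓ^p(α, ℝ), ⇑(T f) = L f) (t : ℝ)
    (f : ℓ^p(α, ℝ)) (x : α) :
    ∑' n : ℕ, t ^ n / n.factorial * (L^[n] f) x = exp (t • T) f x := by
  have hsum := (NormedSpace.exp_series_hasSum_exp' (𝕂 := ℝ) (t • T)).mapL
    ((lp.evalCLM ℝ (fun _ : α ↦ ℝ) p x) ∘L ContinuousLinearMap.apply ℝ ℓ^p(α, ℝ) f)
  refine (tsum_congr fun n ↦ ?_).trans hsum.tsum_eq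
  rw [← coe_pow_apply_eq_iterate hT, smul_pow, smul_smul, map_smul, smul_eq_mul, div_eq_inv_mul]
  rfl

end Semigroup

section UnitSteps

variable {d k : ℕ}

theorem vnorm_sub_comm (a b : Fin d → ℤ) : vnorm (a - b) = vnorm (b - a) := by
  simp only [vnorm, Pi.sub_apply, Int.cast_sub, sub_sq_comm]

theorem vnorm_eq_one_iff (v : Fin d → ℤ) : vnorm v = 1 ↔ ∑ j, v j ^ 2 = 1 := by
  rw [vnorm, Real.sqrt_eq_one]
  exact_mod_cast Iff.rfl

theorem cnorm_eq_one_iff (x : Conf d k) : cnorm x = 1 ↔ ∑ i, ∑ j, x i j ^ 2 = 1 := by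
  rw [cnorm, Real.sqrt_eq_one]
  exact_mod_cast Iff.rfl

theorem cnorm_update_sub (w : Conf d k) (j : Fin k) (u : Fin d → ℤ) :
    cnorm (Function.update w j u - w) = vnorm (u - w j) := by
  rw [cnorm, vnorm, Finset.sum_eq_single j]
  · simp
  · intro i _ hij
    simp [hij]
  · simp

theorem exists_eq_single_of_sum_eq_one {ι : Type*} [Fintype ι] {n : ι → ℤ} (hn : ∀ i, 0 ≤ n i)
    (hsum : ∑ i, n i = 1) : ∃ i, n = Pi.single i 1 := by
  obtain ⟨i, -, hi⟩ : ∃ i ∈ Finset.univ, n i ≠ 0 :=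
    Finset.exists_ne_zero_of_sum_ne_zero (by rw [hsum]; exact one_ne_zero)
  have hsplit := Finset.add_sum_erase Finset.univ n (Finset.mem_univ i)
  have hrest : 0 ≤ ∑ j ∈ Finset.univ.erase i, n j := Finset.sum_nonneg fun j _ ↦ hn j
  have hpos : 0 < n i := (hn i).lt_of_ne' hi
  have hzero : ∀ j ∈ Finset.univ.erase i, n j = 0 :=
    (Finset.sum_eq_zero_iff_of_nonneg fun j _ ↦ hn j).1 (by lia)
  refine ⟨i, funext fun j ↦ ?_⟩
  obtain rfl | hji := eq_or_ne j i
  · rw [Pi.single_eq_same]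
    lia
  · rw [Pi.single_eq_of_ne hji, hzero j (by simp [hji])]

theorem exists_update_of_cnorm_sub_eq_one {w z : Conf d k} (h : cnorm (z - w) = 1) :
    ∃ j u, vnorm (u - w j) = 1 ∧ z = Function.update w j u := by
  obtain ⟨j, hj⟩ := exists_eq_single_of_sum_eq_one
    (fun i ↦ Finset.sum_nonneg fun a _ ↦ sq_nonneg ((z - w) i a)) ((cnorm_eq_one_iff _).1 h)
  have hmoved : ∑ a, (z - w) j a ^ 2 = 1 := by simpa using congrFun hj j
  have hfixed (i : Fin k) (hij : i ≠ j) : z i = w i := by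
    have hsq : ∑ a, (z - w) i a ^ 2 = 0 := by simpa [hij] using congrFun hj i
    rw [Finset.sum_eq_zero_iff_of_nonneg fun a _ ↦ sq_nonneg _] at hsq
    exact funext fun a ↦ sub_eq_zero.1 (pow_eq_zero_iff two_ne_zero |>.1 (hsq a (by simp)))
  exact ⟨j, z j, (vnorm_eq_one_iff _).2 hmoved, Function.eq_update_iff.2 ⟨rfl, hfixed⟩⟩

theorem finite_setOf_cnorm_eq_one (d k : ℕ) : {e : Conf d k | cnorm e = 1}.Finite := by
  refine (Set.finite_Icc (-1 : Conf d k) 1).subset fun e he ↦ ?_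
  have hsum : ∑ i, ∑ j, e i j ^ 2 = 1 := (cnorm_eq_one_iff e).1 he
  have habs (i : Fin k) (j : Fin d) : |e i j| ≤ 1 := by
    rw [← sq_le_one_iff_abs_le_one, ← hsum]
    calc e i j ^ 2 ≤ ∑ j, e i j ^ 2 :=
          Finset.single_le_sum (fun j _ ↦ sq_nonneg (e i j)) (Finset.mem_univ j)
      _ ≤ ∑ i, ∑ j, e i j ^ 2 := Finset.single_le_sum (f := fun i ↦ ∑ j, e i j ^ 2)
          (fun i _ ↦ Finset.sum_nonneg fun j _ ↦ sq_nonneg (e i j)) (Finset.mem_univ i)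
  exact ⟨fun i j ↦ (abs_le.1 (habs i j)).1, fun i j ↦ (abs_le.1 (habs i j)).2⟩

/-- The configurations of Euclidean norm one, i.e. the possible jumps of the `k` particles. -/
def unitSteps (d k : ℕ) : Finset (Conf d k) := (finite_setOf_cnorm_eq_one d k).toFinset

theorem mem_unitSteps {e : Conf d k} : e ∈ unitSteps d k ↔ cnorm e = 1 := by
  simp [unitSteps]

theorem tsum_ite_cnorm_sub_eq_one (A : Set (Conf d k)) (F : Conf d k → ℝ) (x : Conf d k) :
    (∑' z, if cnorm (z - x) = 1 ∧ z ∈ A then F z else 0) =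
      ∑ e ∈ unitSteps d k, if e + x ∈ A then F (e + x) else 0 := by
  rw [← (Equiv.addRight x).tsum_eq, tsum_eq_sum (s := unitSteps d k)]
  · refine Finset.sum_congr rfl fun e he ↦ ?_
    simp [mem_unitSteps.1 he]
  · intro e he
    simp [mt mem_unitSteps.2 he]

end UnitSteps

section Exclusion

variable {d k : ℕ}

theorem mem_SSet_iff_injective {x : Conf d k} : x ∈ SSet d k ↔ Injective x :=
  ⟨fun hx i j hij ↦ by_contra fun hne ↦ hx i j hne hij, fun hx _ _ hij ↦ hx.ne hij⟩

theorem cswap_involutive (i j : Fin k) : Involutive (cswap (d := d) i j) := fun x ↦ by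
  ext a b
  simp [cswap]

theorem cswap_mem_SSet (i j : Fin k) {x : Conf d k} (hx : x ∈ SSet d k) :
    cswap i j x ∈ SSet d k :=
  mem_SSet_iff_injective.2 ((mem_SSet_iff_injective.1 hx).comp (Equiv.swap i j).injective)

theorem update_notMem_SSet_iff {w : Conf d k} (hw : w ∈ SSet d k) (j : Fin k)
    (u : Fin d → ℤ) : Function.update w j u ∉ SSet d k ↔ ∃ i, i ≠ j ∧ w i = u := by
  rw [mem_SSet_iff_injective] at hw ⊢
  constructor
  · intro h
    obtain ⟨a, b, hab, hne⟩ := Function.not_injective_iff.1 h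
    obtain rfl | ha := eq_or_ne a j
    · exact ⟨b, hne.symm, by simpa [hne.symm] using hab.symm⟩
    obtain rfl | hb := eq_or_ne b j
    · exact ⟨a, hne, by simpa [hne] using hab⟩
    · exact absurd (hw (by simpa [ha, hb] using hab)) hne
  · rintro ⟨i, hij, rfl⟩ h
    exact hij (h (by simp [hij]))

theorem bijOn_cdelta {w : Conf d k} (hw : w ∈ SSet d k) :
    Set.BijOn (fun q : Fin k × Fin k ↦ cdelta q.1 q.2 w)
      {q | q.1 ≠ q.2 ∧ vnorm (w q.2 - w q.1) = 1}
      {z | cnorm (z - w) = 1 ∧ z ∈ (SSet d k)ᶜ} := by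
  have hinj : Injective w := mem_SSet_iff_injective.1 hw
  refine ⟨?_, ?_, ?_⟩
  · rintro ⟨i, j⟩ ⟨hij, hadj⟩
    refine ⟨?_, (update_notMem_SSet_iff hw j (w i)).2 ⟨i, hij, rfl⟩⟩
    exact (cnorm_update_sub w j (w i)).trans ((vnorm_sub_comm _ _).trans hadj)
  · rintro ⟨i, j⟩ ⟨hij, -⟩ ⟨i', j'⟩ - heq
    have hj : j = j' := by
      by_contra hne
      have hji : w i = w j := by simpa [cdelta, hne] using congrFun heq j
      exact hij (hinj hji)
    subst hj
    have hi : w i = w i' := by simpa [cdelta] using congrFun heq j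
    rw [hinj hi]
  · rintro z ⟨hz, hzS⟩
    obtain ⟨j, u, hu, rfl⟩ := exists_update_of_cnorm_sub_eq_one hz
    obtain ⟨i, hij, rfl⟩ := (update_notMem_SSet_iff hw j u).1 hzS
    exact ⟨(i, j), ⟨hij, by rw [vnorm_sub_comm, hu]⟩, rfl⟩

theorem tsum_collisions {w : Conf d k} (hw : w ∈ SSet d k) (F : Conf d k → ℝ) :
    (∑' z, if cnorm (z - w) = 1 ∧ z ∈ (SSet d k)ᶜ then F z else 0) =
      ∑ i : Fin k, ∑ j : Fin k,
        if i ≠ j ∧ vnorm (w j - w i) = 1 then F (cdelta i j w) else 0 := by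
  have hbij := bijOn_cdelta hw
  calc
    _ = ∑' z : {z | cnorm (z - w) = 1 ∧ z ∈ (SSet d k)ᶜ}, F z := by
        simp only [tsum_subtype, Set.indicator_apply, Set.mem_ofPred_eq]
    _ = ∑' q : {q : Fin k × Fin k | q.1 ≠ q.2 ∧ vnorm (w q.2 - w q.1) = 1},
          F (cdelta q.1.1 q.1.2 w) := (hbij.equiv.tsum_eq fun z ↦ F z).symm
    _ = ∑' q : Fin k × Fin k,
          if q.1 ≠ q.2 ∧ vnorm (w q.2 - w q.1) = 1 then F (cdelta q.1 q.2 w) else 0 := by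
        rw [tsum_subtype _ fun q : Fin k × Fin k ↦ F (cdelta q.1 q.2 w)]
        simp only [Set.indicator_apply, Set.mem_ofPred_eq]
    _ = _ := by rw [tsum_fintype, Fintype.sum_prod_type]

/-- The generator on `ℓ¹` of the walk jumping at rate one to each neighbouring configuration in
`A`, all other jumps being suppressed. -/
def jumpOp (A : Set (Conf d k)) : ℓ¹(Conf d k, ℝ) →L[ℝ] ℓ¹(Conf d k, ℝ) :=
  ∑ e ∈ unitSteps d k, jumpFromOp 1 {x | e + x ∈ A} (add_right_injective e)

/-- The generator on `ℓ¹` of the exchanges of neighbouring particles, started from `𝕊^k`. -/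
def swapOp (d k : ℕ) : ℓ¹(Conf d k, ℝ) →L[ℝ] ℓ¹(Conf d k, ℝ) :=
  ∑ i : Fin k, ∑ j : Fin k,
    jumpFromOp 1 {x | i < j ∧ vnorm (x i - x j) = 1 ∧ x ∈ SSet d k} (cswap_involutive i j).injective

/-- The generator of the labelled exclusion process as an operator on `ℓ¹`. -/
def exclusionOp (d k : ℕ) : ℓ¹(Conf d k, ℝ) →L[ℝ] ℓ¹(Conf d k, ℝ) :=
  jumpOp (SSet d k) + swapOp d k

theorem jumpOp_apply (A : Set (Conf d k)) (f : ℓ¹(Conf d k, ℝ)) (x : Conf d k) :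
    jumpOp A f x = ∑' z, if cnorm (z - x) = 1 ∧ z ∈ A then f z - f x else 0 := by
  rw [tsum_ite_cnorm_sub_eq_one A (fun z ↦ f z - f x), jumpOp, sum_clm_apply_apply]
  exact Finset.sum_congr rfl fun e _ ↦
    (jumpFromOp_apply _ _ f x).trans (Set.indicator_apply _ _ x)

theorem swapOp_apply (f : ℓ¹(Conf d k, ℝ)) (x : Conf d k) :
    swapOp d k f x = ∑ i : Fin k, ∑ j : Fin k,
      if i < j ∧ vnorm (x i - x j) = 1 ∧ x ∈ SSet d k then f (cswap i j x) - f x else 0 := by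
  simp only [swapOp, sum_clm_apply_apply]
  exact Finset.sum_congr rfl fun i _ ↦ Finset.sum_congr rfl fun j _ ↦
    (jumpFromOp_apply _ _ f x).trans (Set.indicator_apply _ _ x)

theorem coe_jumpOp_univ_apply (f : ℓ¹(Conf d k, ℝ)) : ⇑(jumpOp Set.univ f) = Lrw f := by
  ext x
  simp only [jumpOp_apply, Lrw, Set.mem_univ, and_true]

theorem coe_exclusionOp_apply (f : ℓ¹(Conf d k, ℝ)) : ⇑(exclusionOp d k f) = Lexc f := by
  ext x
  rw [Lexc, ← jumpOp_apply, ← swapOp_apply]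
  rfl

theorem jumpOp_add_jumpOp_compl (A : Set (Conf d k)) : jumpOp A + jumpOp Aᶜ = jumpOp Set.univ := by
  simp only [jumpOp, ← Finset.sum_add_distrib]
  refine Finset.sum_congr rfl fun e _ ↦ ?_
  ext f x
  change jumpFromOp 1 {z | e + z ∈ A} _ f x + jumpFromOp 1 {z | e + z ∈ A}ᶜ _ f x =
    jumpFromOp 1 Set.univ _ f x
  rw [jumpFromOp_apply, jumpFromOp_apply, jumpFromOp_apply, Set.indicator_univ]
  exact congrFun (Set.indicator_self_add_compl _ _) x

theorem jumpOp_univ_sub_exclusionOp :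
    jumpOp Set.univ - exclusionOp d k = jumpOp (SSet d k)ᶜ - swapOp d k := by
  rw [exclusionOp, ← jumpOp_add_jumpOp_compl (SSet d k), add_sub_add_left_eq_sub]

theorem ptrw_eq_exp (t : ℝ) (x y : Conf d k) :
    ptrw t x y = exp (t • jumpOp Set.univ) (pointMass 1 y) x := by
  rw [ptrw, ← tsum_pow_div_factorial_mul_iterate coe_jumpOp_univ_apply, coe_pointMass]

theorem ptl_eq_exp (t : ℝ) (x y : Conf d k) :
    ptl t x y = exp (t • exclusionOp d k) (pointMass 1 y) x := by
  rw [ptl, ← tsum_pow_div_factorial_mul_iterate coe_exclusionOp_apply, coe_pointMass]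

theorem eqOn_zero_Lexc {f : Conf d k → ℝ} (hf : Set.EqOn f 0 (SSet d k)) :
    Set.EqOn (Lexc f) 0 (SSet d k) := by
  intro x hx
  have hjump (z : Conf d k) :
      (if cnorm (z - x) = 1 ∧ z ∈ SSet d k then f z - f x else 0) = 0 :=
    ite_eq_right_iff.2 fun hz ↦ by rw [hf hz.2, hf hx, Pi.zero_apply, Pi.zero_apply, sub_self]
  have hswap (i j : Fin k) : f (cswap i j x) - f x = 0 := by
    rw [hf (cswap_mem_SSet i j hx), hf hx, Pi.zero_apply, Pi.zero_apply, sub_self]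
  simp only [Lexc, hjump, hswap, tsum_zero, ite_self, Finset.sum_const_zero, add_zero,
    Pi.zero_apply]

theorem ptl_eq_zero_of_notMem (t : ℝ) {x w : Conf d k} (hx : x ∈ SSet d k) (hw : w ∉ SSet d k) :
    ptl t x w = 0 := by
  have hiter (n : ℕ) : Set.EqOn (Lexc^[n] (deltaFn w)) 0 (SSet d k) := by
    induction n with
    | zero => exact fun z hz ↦ if_neg (ne_of_mem_of_not_mem hz hw)
    | succ n ih =>
      rw [Function.iterate_succ_apply']
      exact eqOn_zero_Lexc ih
  simp only [ptl, hiter _ hx, Pi.zero_apply, mul_zero, tsum_zero]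

theorem tsum_ptl_mul (t : ℝ) {x : Conf d k} (hx : x ∈ SSet d k) {h : Conf d k → ℝ}
    {g : ℓ¹(Conf d k, ℝ)} (hg : Set.EqOn h g (SSet d k)) :
    ∑' w : SSet d k, ptl t x w * h w = exp (t • exclusionOp d k) g x := by
  calc
    _ = ∑' w : SSet d k, ptl t x w * g w := tsum_congr fun w ↦ by rw [hg w.2]
    _ = ∑' w, ptl t x w * g w :=
        tsum_subtype_eq_of_support_subset (f := fun w ↦ ptl t x w * g w) fun w hw ↦
          by_contra fun hwS ↦ hw (by simp only [ptl_eq_zero_of_notMem t hx hwS, zero_mul])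
    _ = _ := by
        simp only [ptl_eq_exp]
        exact tsum_apply_pointMass_mul ENNReal.one_ne_top _ g x

theorem eqOn_sum_cdelta_jumpOp_compl (f : ℓ¹(Conf d k, ℝ)) :
    Set.EqOn
      (fun w ↦ ∑ i : Fin k, ∑ j : Fin k,
        if i ≠ j ∧ vnorm (w j - w i) = 1 then f (cdelta i j w) - f w else 0)
      (jumpOp (SSet d k)ᶜ f) (SSet d k) := fun w hw ↦ by
  rw [jumpOp_apply]
  convert (tsum_collisions hw fun z ↦ f z - f w).symm

theorem eqOn_sum_cswap_swapOp (f : ℓ¹(Conf d k, ℝ)) :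
    Set.EqOn
      (fun w ↦ ∑ i : Fin k, ∑ j : Fin k,
        if i < j ∧ vnorm (w i - w j) = 1 then f (cswap i j w) - f w else 0)
      (swapOp d k f) (SSet d k) := fun w hw ↦ by
  simp only [swapOp_apply, hw, and_true]

end Exclusion

theorem duhamel_comparison_general {d k : ℕ} {x : Conf d k} (hx : x ∈ SSet d k) (y : Conf d k)
    (t : ℝ) :
    ptrw t x y - ptl t x y =
      (∫ s in (0 : ℝ)..t, ∑' w : SSet d k, ptl (t - s) x w.val *
          ∑ i : Fin k, ∑ j : Fin k,
            (if i ≠ j ∧ vnorm (w.val j - w.val i) = 1 then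
              ptrw s (cdelta i j w.val) y - ptrw s w.val y else 0))
      - ∫ s in (0 : ℝ)..t, ∑' w : SSet d k, ptl (t - s) x w.val *
          ∑ i : Fin k, ∑ j : Fin k,
            (if i < j ∧ vnorm (w.val i - w.val j) = 1 then
              ptrw s (cswap i j w.val) y - ptrw s w.val y else 0) := by
  let u (s : ℝ) : ℓ¹(Conf d k, ℝ) := exp (s • jumpOp Set.univ) (pointMass 1 y)
  have hdelta (s : ℝ) := tsum_ptl_mul (t - s) hx (eqOn_sum_cdelta_jumpOp_compl (u s))
  have hswap (s : ℝ) := tsum_ptl_mul (t - s) hx (eqOn_sum_cswap_swapOp (u s))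
  simp only [ptrw_eq_exp, u, hdelta, hswap, ptl_eq_exp t]
  exact apply_exp_smul_sub_apply_exp_smul_eq_integral_sub
    ((lp.evalCLM ℝ (fun _ : Conf d k ↦ ℝ) 1 x) ∘L
      ContinuousLinearMap.apply ℝ ℓ¹(Conf d k, ℝ) (pointMass 1 y))
    jumpOp_univ_sub_exclusionOp t

/-- Lemma (Duhamel-type comparison formula): for every `x, y ∈ 𝕊^k` and every `t ≥ 0`,
`p_t^{rw}(x,y) − p_t^ℓ(x,y)` equals the difference of the two time integrals involving
`δ^{i,j}` moves and `σ^{i,j}` swaps, respectively. -/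
theorem duhamel_comparison (d k : ℕ) (hd : 1 ≤ d) (hk : 1 ≤ k)
    (x y : Conf d k) (hx : x ∈ SSet d k) (hy : y ∈ SSet d k) (t : ℝ) (ht : 0 ≤ t) :
    ptrw t x y - ptl t x y =
      (∫ s in (0 : ℝ)..t, ∑' w : SSet d k, ptl (t - s) x w.val *
          ∑ i : Fin k, ∑ j : Fin k,
            (if i ≠ j ∧ vnorm (w.val j - w.val i) = 1 then
              ptrw s (cdelta i j w.val) y - ptrw s w.val y else 0))
      - ∫ s in (0 : ℝ)..t, ∑' w : SSet d k, ptl (t - s) x w.val *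
          ∑ i : Fin k, ∑ j : Fin k,
            (if i < j ∧ vnorm (w.val i - w.val j) = 1 then
              ptrw s (cswap i j w.val) y - ptrw s w.val y else 0) := by
  exact duhamel_comparison_general hx y t

end SSEPPaper
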